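/- Let Q be a quiver and P the path algebra of its double Q̄ over k. The k-linear map η_rt : P → T_rt(Φ_rt) defined on paths by η_rt(a₁⋯aₙ) = Σ_{cuts H of a₁⋯aₙ} ε_H (T_H, s_H) is an injective homomorphism of pre-Lie coalgebras from (P, δ_{p,rt}) to (T_rt(Φ_rt), ρ). -/

import Mathlib

/-!
Statement 10: for a quiver `Q`, the map
`η_rt(a₁⋯aₙ) = Σ_{cuts H} ε_H (T_H, s_H)` (where `(T_H, s_H)` is the dual decorated
rooted tree of the chord diagram of the cut `H`) is an injective homomorphism of pre-Lie
coalgebras from `(P, δ_{p,rt})` to `(T_rt(Φ_rt), ρ)`.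
-/

open TensorProduct

noncomputable section

section PreLie

variable (k : Type*) [CommRing k] (g : Type*) [AddCommGroup g] [Module k g]

/-- `τ_{(12)}` on the triple tensor product `g ⊗ (g ⊗ g)`: `x⊗y⊗z ↦ y⊗x⊗z`. -/
def tau12 : g ⊗[k] (g ⊗[k] g) →ₗ[k] g ⊗[k] (g ⊗[k] g) :=
  (TensorProduct.assoc k g g g).toLinearMap ∘ₗ
    (LinearMap.rTensor g (TensorProduct.comm k g g).toLinearMap) ∘ₗ
    (TensorProduct.assoc k g g g).symm.toLinearMap

variable {k g}

/-- `δ₀ : g → g ⊗ g` is a (left) pre-Lie comultiplication if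
`(Id − τ_{(12)}) ∘ (δ₀ ⊗ Id − Id ⊗ δ₀) ∘ δ₀ = 0`. -/
def IsPreLieComul (δ : g →ₗ[k] g ⊗[k] g) : Prop :=
  (LinearMap.id - tau12 k g) ∘ₗ
      (((TensorProduct.assoc k g g g).toLinearMap ∘ₗ LinearMap.rTensor g δ)
        - LinearMap.lTensor g δ) ∘ₗ δ = 0

end PreLie

/-! ### Quivers, double quivers and paths

A quiver `Q` is given by a vertex type `I`, an arrow type `E`, and source/target maps
`s t : E → I`. -/

/-- The arrows of the double quiver `Q̄ = Q ⊔ Q*`: `.inl e = e` and `.inr e = e*`. -/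
abbrev Arr (E : Type*) := E ⊕ E

/-- The involution `a ↦ a*` on arrows of the double quiver (with `(e*)* = e`). -/
def astar {E : Type*} : Arr E → Arr E
  | .inl e => .inr e
  | .inr e => .inl e

/-- The source `a_s` of an arrow of the double quiver. -/
def asrc {I E : Type*} (s t : E → I) : Arr E → I
  | .inl e => s e
  | .inr e => t e

/-- The target `a_t` of an arrow of the double quiver. -/
def atgt {I E : Type*} (s t : E → I) : Arr E → I
  | .inl e => t e
  | .inr e => s e

open scoped Classical in
/-- The pairing `ω`: `ω(e,e*) = 1`, `ω(e*,e) = −1` for `e ∈ Q`, and `ω(a,b) = 0`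
whenever `b ≠ a*`. -/
def omg (k : Type*) [CommRing k] {E : Type*} : Arr E → Arr E → k
  | .inl e, .inr e' => if e = e' then 1 else 0
  | .inr e, .inl e' => if e = e' then -1 else 0
  | _, _ => 0

/-- `IsPathFrom s t v l`: `l` is a composable sequence of arrows starting at `v`. -/
def IsPathFrom {I E : Type*} (s t : E → I) : I → List (Arr E) → Prop
  | _, [] => True
  | v, a :: l => asrc s t a = v ∧ IsPathFrom s t (atgt s t a) l

/-- The target of a path. -/
def pathTgt {I E : Type*} (s t : E → I) : I → List (Arr E) → I
  | v, [] => v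
  | _, a :: l => pathTgt s t (atgt s t a) l

/-- A path in the double quiver `Q̄`. -/
structure QPath {I E : Type*} (s t : E → I) : Type _ where
  src : I
  arrows : List (Arr E)
  valid : IsPathFrom s t src arrows

/-! ### Cuts of paths -/

/-- A cut of a path with arrow list `l` (0-indexed): a set `H` of pairs `(i,j)` of
positions such that all the involved positions are distinct, `i < j` for each pair, the
pairs do not cross, and for each pair `{a_i, a_j} = {e, e*}` for some arrow `e ∈ Q`. -/
def IsCut {E : Type*} (l : List (Arr E)) (H : Finset (ℕ × ℕ)) : Prop :=
  (∀ c ∈ H, c.1 < c.2 ∧ c.2 < l.length ∧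
    ∃ e : E, (l[c.1]? = some (.inl e) ∧ l[c.2]? = some (.inr e)) ∨
             (l[c.1]? = some (.inr e) ∧ l[c.2]? = some (.inl e))) ∧
  (∀ c ∈ H, ∀ c' ∈ H, c ≠ c' →
    c.1 ≠ c'.1 ∧ c.1 ≠ c'.2 ∧ c.2 ≠ c'.1 ∧ c.2 ≠ c'.2) ∧
  ¬ ∃ c ∈ H, ∃ c' ∈ H, c.1 < c'.1 ∧ c'.1 < c.2 ∧ c.2 < c'.2

/-- No pair of a cut is nested inside another: together with `IsCut` this defines
simple cuts of paths. -/
def NoNest (H : Finset (ℕ × ℕ)) : Prop :=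
  ¬ ∃ c ∈ H, ∃ c' ∈ H, c.1 < c'.1 ∧ c'.2 < c.2

/-- A simple cut of a path: a cut in which no pair is nested inside another. -/
def IsSimpleCut {E : Type*} (l : List (Arr E)) (H : Finset (ℕ × ℕ)) : Prop :=
  IsCut l H ∧ NoNest H

/-- The sign `ε` contributed by one pair of a cut: `−ω(a_i, a_j)`. -/
def epsFactor (k : Type*) [CommRing k] {E : Type*} (l : List (Arr E)) (c : ℕ × ℕ) : k :=
  match l[c.1]?, l[c.2]? with
  | some a, some b => -(omg k a b)
  | _, _ => 0

/-- The sign `ε_H = ∏_ℓ (−ω(a_{i_ℓ}, a_{j_ℓ}))` of a cut. -/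
def epsH (k : Type*) [CommRing k] {E : Type*} (l : List (Arr E)) (H : Finset (ℕ × ℕ)) :
    k := ∏ c ∈ H, epsFactor k l c

/-- The chords of `H` lying strictly inside the chord `(i,j)`, reindexed along the path
`a_{i+1} ⋯ a_{j−1}`. -/
def insideCut (H : Finset (ℕ × ℕ)) (i j : ℕ) : Finset (ℕ × ℕ) :=
  (H.filter (fun c' => i < c'.1 ∧ c'.2 < j)).image
    (fun c' => (c'.1 - (i+1), c'.2 - (i+1)))

/-- The chords of `H` other than `(i,j)` not lying inside the chord `(i,j)`, reindexed
along the path `a₁ ⋯ a_{i−1} a_{j+1} ⋯ a_n`. -/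
def outsideCut (H : Finset (ℕ × ℕ)) (i j : ℕ) : Finset (ℕ × ℕ) :=
  ((H.erase (i, j)).filter (fun c' => ¬ (i < c'.1 ∧ c'.2 < j))).image
    (fun c' => (if j < c'.1 then c'.1 - (j - i + 1) else c'.1,
                if j < c'.2 then c'.2 - (j - i + 1) else c'.2))

/-! ### Decorated rooted trees: the rooted tree-structure `Φ_rt`

`Φ_rt` attaches to a rooted tree a ribbon graph structure with a corner at the root, an
orientation of every edge, and a labeling of every vertex by a path in `Q̄`.  A rooted
tree equipped with a ribbon structure and a corner at the root is the same thing as a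
planar rooted tree (a linear order on the children of every vertex), so a pair `(T,s)`
with `s ∈ Φ_rt(T)`, taken up to isomorphism, is faithfully represented by the following
inductive type: each vertex carries its label (a path) and the ordered list of its
children, each child edge carrying its orientation flag (`true` = oriented from parent
to child).  Isomorphic pairs have equal representations, so `T_rt(Φ_rt)` is the free
module on `DTree`. -/

/-- Rooted trees decorated by the tree-structure `Φ_rt`. -/
inductive DTree {I E : Type*} (s t : E → I) : Type _
  | node : QPath s t → List (Bool × DTree s t) → DTree s t

section DTreeOps

variable {I E : Type*} {s t : E → I}

mutual
/-- All one-edge cuts of a decorated rooted tree: for each edge `e`, the pair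
`(T_e^1, T_e^2)` of decorated trees obtained by deleting `e`; `T_e^2` contains the root,
and the decorations are restricted (labels, edge orientations and planar order are
retained). -/
def DTree.cuts : DTree s t → List (DTree s t × DTree s t)
  | .node x l => (DTree.cutsL l).map (fun p => (p.1, .node x p.2))
/-- Auxiliary to `DTree.cuts`. -/
def DTree.cutsL : List (Bool × DTree s t) →
    List (DTree s t × List (Bool × DTree s t))
  | [] => []
  | (b, u) :: ts =>
      ((u, ts) :: (DTree.cuts u).map (fun p => (p.1, (b, p.2) :: ts)))
        ++ (DTree.cutsL ts).map (fun p => (p.1, (b, u) :: p.2))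
end

end DTreeOps

open scoped Classical in
/-- The path with source `v` and arrows `l`, or the trivial path at `v` if the data is
not a path. -/
def mkQPD {I E : Type*} (s t : E → I) (v : I) (l : List (Arr E)) : QPath s t :=
  if h : IsPathFrom s t v l then ⟨v, l, h⟩ else ⟨v, [], trivial⟩

open scoped Classical in
/-- The dual decorated rooted tree of the chord diagram of a cut `H` (a list of chords)
of the path `a₁ ⋯ aₙ` (arrow list `l`), built recursively face by face.  The face under
a chord `(i,j)` (and above the chords nested directly below it) gives a vertex; its
children are the chords directly nested below, from left to right (the ribbon/corner
structure), the orientation of a dual edge is `true` (from parent to child) exactly when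
the left endpoint of the corresponding chord is an arrow of `Q` (recall that the chord
through `(i,j)` is oriented from `i` to `j` if `a_i ∈ Q`, the dual edge crossing it
positively), and the label is the path formed by the arrows lying in the face and
incident to no chord.  The arguments are: fuel (for termination; it is never exhausted
when called with fuel larger than the length of `l`), the chords to be processed, the
window `[lo, hi)` of positions, and the source vertex of the label path of the current
face. -/
def buildT {I E : Type*} (s t : E → I) (l : List (Arr E)) :
    ℕ → List (ℕ × ℕ) → ℕ → ℕ → I → DTree s t
  | 0, _, _, _, v => .node (mkQPD s t v []) []
  | fuel+1, H, lo, hi, v =>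
      let outer : List (ℕ × ℕ) := (List.range l.length).filterMap (fun i =>
        match H.find? (fun c => c.1 == i) with
        | some c => if lo ≤ c.1 ∧ c.2 < hi ∧
            ¬ (H.any (fun c' =>
              decide (c' ≠ c ∧ lo ≤ c'.1 ∧ c'.1 < c.1 ∧ c.2 < c'.2 ∧ c'.2 < hi)))
            then some c else none
        | none => none)
      let lbl : List (Arr E) := (List.range l.length).filterMap (fun m =>
        if lo ≤ m ∧ m < hi ∧ ¬ outer.any (fun c => decide (c.1 ≤ m ∧ m ≤ c.2))
        then l[m]? else none)
      .node (mkQPD s t v lbl)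
        (outer.map (fun c =>
          ((match l[c.1]? with | some (.inl _) => true | _ => false),
           buildT s t l fuel
             (H.filter (fun c' => decide (c.1 < c'.1 ∧ c'.2 < c.2)))
             (c.1+1) c.2
             (match l[c.1]? with | some a => atgt s t a | none => v))))

/-- The dual decorated rooted tree `(T_H, s_H)` of a cut `H` of a path. -/
def dualTree {I E : Type*} (s t : E → I) (v : I) (l : List (Arr E))
    (H : Finset (ℕ × ℕ)) : DTree s t :=
  buildT s t l (l.length + 1) H.toList 0 l.length v

/-- The finset of all cuts of the list of arrows `l`. -/
def allCuts {E : Type*} (l : List (Arr E)) : Finset (Finset (ℕ × ℕ)) :=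
  open scoped Classical in
  ((Finset.range l.length ×ˢ Finset.range l.length).powerset).filter
    (fun H => IsCut l H)

open scoped Classical

/-- The sum of a list of elements of an additive commutative monoid. -/
def lsum {M : Type*} [AddCommMonoid M] (l : List M) : M := l.foldr (· + ·) 0

variable (k : Type*) [CommRing k] {I E : Type*} (s t : E → I)

/-- `P`, the path algebra as a `k`-module: free on the set of paths of `Q̄`. -/
abbrev PathMod := QPath s t →₀ k

/-- `T_rt(Φ_rt)`: the free `k`-module on the isomorphism classes of pairs `(T,s)` with
`T` a rooted tree and `s ∈ Φ_rt(T)`, realized as the free module on `DTree`. -/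
abbrev DMod := DTree s t →₀ k

/-- The basis vector of a path, or `0` if the data does not define a path. -/
def mkP (v : I) (l : List (Arr E)) : PathMod k s t :=
  if h : IsPathFrom s t v l then Finsupp.single ⟨v, l, h⟩ (1 : k) else 0

/-- The summand of `δ_{p,rt}` for a pair of positions `i < j`:
`−ω(a_i,a_j) ((a_i)_t a_{i+1}⋯a_{j−1}) ⊗ ((a₁)_s a₁⋯a_{i−1} a_{j+1}⋯aₙ)`. -/
def dpTerm (p : QPath s t) (i j : ℕ) : PathMod k s t ⊗[k] PathMod k s t :=
  match p.arrows[i]?, p.arrows[j]? with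
  | some a, some b =>
      (-(omg k a b)) •
        (mkP k s t (atgt s t a) ((p.arrows.drop (i+1)).take (j - i - 1)) ⊗ₜ[k]
          mkP k s t p.src (p.arrows.take i ++ p.arrows.drop (j+1)))
  | _, _ => (0 : k) • (mkP k s t p.src [] ⊗ₜ[k] mkP k s t p.src [])

/-- The rooted pre-Lie comultiplication `δ_{p,rt}` on the path algebra `P`. -/
def deltaPrt : PathMod k s t →ₗ[k] PathMod k s t ⊗[k] PathMod k s t :=
  Finsupp.lift (PathMod k s t ⊗[k] PathMod k s t) k (QPath s t) fun p =>
    ∑ i ∈ Finset.range p.arrows.length, ∑ j ∈ Finset.range p.arrows.length,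
      if i < j then dpTerm k s t p i j else (0 : k) • dpTerm k s t p i j

/-- The pre-Lie comultiplication `ρ((T,s)) = Σ_{e∈E(T)} (T_e^1, s|) ⊗ (T_e^2, s|)` on
`T_rt(Φ_rt)`. -/
def rhoD : DMod k s t →ₗ[k] DMod k s t ⊗[k] DMod k s t :=
  Finsupp.lift (DMod k s t ⊗[k] DMod k s t) k (DTree s t) fun T =>
    lsum ((DTree.cuts T).map fun p =>
      Finsupp.single p.1 (1 : k) ⊗ₜ[k] Finsupp.single p.2 (1 : k))

/-- The homomorphism `η_rt(a₁⋯aₙ) = Σ_{cuts H} ε_H (T_H, s_H)`. -/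
def etaRt : PathMod k s t →ₗ[k] DMod k s t :=
  Finsupp.lift (DMod k s t) k (QPath s t) fun p =>
    ∑ H ∈ allCuts p.arrows,
      epsH k p.arrows H • Finsupp.single (dualTree s t p.src p.arrows H) (1 : k)

/-!
A cut of a word is noncrossing, so a word with a cut parses uniquely from left to right: it is
empty, or starts with a letter incident to no chord, or has the form `a m a* r` with a chord
joining `a` to `a*`. On these syntax trees the sign, the dual tree and the list of its edges are
given by structural recursion. An edge of `T_H` is a chord of `H`, and deleting it splits the word
into the part below the chord and the part that remains outside, each with its own cut, while the
sign is multiplicative. So pairs of a cut and an edge of its dual tree, which index `ρ ∘ η_rt`,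
correspond to pairs of matched letters with a cut of the inner and a cut of the outer word, which
index `(η_rt ⊗ η_rt) ∘ δ_{p,rt}`.

For injectivity, only the empty cut has a dual tree with a single vertex, and this vertex is
labelled by the path itself. Reading off this label is a left inverse of `η_rt`.
-/

section Lists

variable {α : Type*}

theorem cons_prefix_drop_iff {a : α} {l L : List α} {n : ℕ} :
    a :: l <+: L.drop n ↔ L[n]? = some a ∧ l <+: L.drop (n + 1) := by
  rw [List.cons_prefix_iff, ← List.head?_drop, ← List.tail_drop]
  cases L.drop n <;> simp [eq_comm]

theorem append_prefix_drop_iff {l l' L : List α} {n : ℕ} :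
    l ++ l' <+: L.drop n ↔ l <+: L.drop n ∧ l' <+: L.drop (n + l.length) := by
  induction l generalizing n with
  | nil => simp
  | cons a l ih =>
    simp only [List.cons_append, cons_prefix_drop_iff, ih, and_assoc, List.length_cons,
      Nat.add_right_comm n 1, Nat.add_assoc]

theorem exists_eq_append_cons_append_cons {l : List α} {i j : ℕ} (hij : i < j)
    (hj : j < l.length) :
    ∃ u a v b r, l = u ++ a :: (v ++ b :: r) ∧ u.length = i ∧ u.length + v.length + 1 = j := by
  refine ⟨l.take i, l[i], (l.drop (i + 1)).take (j - (i + 1)), l[j], l.drop (j + 1), ?_,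
    by grind, by grind⟩
  have hdrop : l.drop j = (l.drop (i + 1)).drop (j - (i + 1)) := by
    rw [List.drop_drop, Nat.add_sub_cancel' hij]
  rw [← List.drop_eq_getElem_cons, hdrop, List.take_append_drop, ← List.drop_eq_getElem_cons,
    List.take_append_drop]

end Lists

/-! ### Words with a cut -/

/-- A word in the double quiver together with a cut of it, parsed from left to right: the empty
word, a letter incident to no chord followed by a cut word, or `a m a* r` with a chord joining
`a` to `a*` and cut words `m` below and `r` to the right of the chord. -/
inductive CutWord (E : Type*) : Type _
  | nil : CutWord E
  | arr : Arr E → CutWord E → CutWord E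
  | chord : Arr E → CutWord E → CutWord E → CutWord E

namespace CutWord

section Chords

variable {L : List (Arr E)} {o : ℕ} {w : CutWord E}

/-- The underlying word, forgetting the chords. -/
def word : CutWord E → List (Arr E)
  | nil => []
  | arr a w => a :: w.word
  | chord a m r => a :: (m.word ++ astar a :: r.word)

/-- The length of the underlying word. -/
def length (w : CutWord E) : ℕ := w.word.length

@[simp] theorem length_nil : (nil : CutWord E).length = 0 := rfl

@[simp] theorem length_arr (a : Arr E) (w : CutWord E) : (arr a w).length = w.length + 1 := rfl

@[simp] theorem length_chord (a : Arr E) (m r : CutWord E) :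
    (chord a m r).length = m.length + r.length + 2 := by
  simp only [length, word, List.length_cons, List.length_append]
  omega

/-- The cut of the underlying word, as the list of its chords by increasing left end. Positions
are shifted by `o`, the position of the first letter. -/
def chords : ℕ → CutWord E → List (ℕ × ℕ)
  | _, nil => []
  | o, arr _ w => chords (o + 1) w
  | o, chord _ m r =>
      (o, o + m.length + 1) :: (chords (o + 1) m ++ chords (o + m.length + 2) r)

/-- The underlying word of `w` occurs in `L` at position `o`. -/
def FitsAt (L : List (Arr E)) (o : ℕ) (w : CutWord E) : Prop := w.word <+: L.drop o

@[simp] theorem fitsAt_arr {a : Arr E} :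
    FitsAt L o (arr a w) ↔ L[o]? = some a ∧ FitsAt L (o + 1) w :=
  cons_prefix_drop_iff

@[simp] theorem fitsAt_chord {a : Arr E} {m r : CutWord E} :
    FitsAt L o (chord a m r) ↔ L[o]? = some a ∧ FitsAt L (o + 1) m ∧
      L[o + m.length + 1]? = some (astar a) ∧ FitsAt L (o + m.length + 2) r := by
  simp only [FitsAt, word, cons_prefix_drop_iff, append_prefix_drop_iff, length]
  grind

theorem fitsAt_word (w : CutWord E) : FitsAt w.word 0 w := List.prefix_rfl

theorem FitsAt.word_eq (hw : FitsAt L 0 w) (hl : w.length = L.length) : w.word = L :=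
  List.IsPrefix.eq_of_length hw hl

theorem bounds_of_mem_chords {c : ℕ × ℕ} (hc : c ∈ chords o w) :
    o ≤ c.1 ∧ c.1 < c.2 ∧ c.2 < o + w.length := by
  induction w generalizing o <;> grind [chords, length_nil, length_arr, length_chord]

theorem pairwise_chords (o : ℕ) (w : CutWord E) :
    (chords o w).Pairwise fun c c' => c.1 < c'.1 := by
  induction w generalizing o with
  | nil => exact List.Pairwise.nil
  | arr _ _ ih => exact ih _
  | chord a m r ihm ihr =>
    simp only [chords, List.pairwise_cons, List.pairwise_append]
    grind [→ bounds_of_mem_chords]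

theorem nodup_map_fst_chords (o : ℕ) (w : CutWord E) : ((chords o w).map Prod.fst).Nodup :=
  (List.pairwise_map.2 (pairwise_chords o w)).imp ne_of_lt

theorem mem_chords_below {a : Arr E} {m r : CutWord E} {c : ℕ × ℕ} :
    c ∈ chords (o + 1) m ↔
      c ∈ chords o (chord a m r) ∧ o < c.1 ∧ c.2 < o + m.length + 1 := by
  grind [chords, → bounds_of_mem_chords]

theorem mem_chords_right {a : Arr E} {m r : CutWord E} {c : ℕ × ℕ} :
    c ∈ chords (o + m.length + 2) r ↔
      c ∈ chords o (chord a m r) ∧ o + m.length + 1 < c.1 := by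
  grind [chords, → bounds_of_mem_chords]

/-- Two chords are disjoint, including their ends: they lie side by side or one of them is
nested strictly below the other. -/
def Noncrossing (c c' : ℕ × ℕ) : Prop :=
  c.2 < c'.1 ∨ c'.2 < c.1 ∨ (c.1 < c'.1 ∧ c'.2 < c.2) ∨ (c'.1 < c.1 ∧ c.2 < c'.2)

/-- `H` is a cut of the word `L` all of whose chords lie in the window `[lo, hi)`. -/
structure IsCutOn (L : List (Arr E)) (lo hi : ℕ) (H : Set (ℕ × ℕ)) : Prop where
  bounds : ∀ c ∈ H, lo ≤ c.1 ∧ c.1 < c.2 ∧ c.2 < hi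
  matched : ∀ c ∈ H, ∃ a, L[c.1]? = some a ∧ L[c.2]? = some (astar a)
  noncrossing : H.Pairwise Noncrossing

theorem isCut_iff_isCutOn {H : Finset (ℕ × ℕ)} : IsCut L H ↔ IsCutOn L 0 L.length H := by
  constructor
  · rintro ⟨hH, hne, hcross⟩
    refine ⟨fun c hc => ?_, fun c hc => ?_, fun c hc c' hc' h => ?_⟩
    · grind
    · obtain ⟨-, -, e, he | he⟩ := hH c hc
      exacts [⟨_, he⟩, ⟨_, he⟩]
    · have := hne c hc c' hc' h
      have := hH c hc
      have := hH c' hc'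
      have : ¬ (c.1 < c'.1 ∧ c'.1 < c.2 ∧ c.2 < c'.2) := fun hx => hcross ⟨c, hc, c', hc', hx⟩
      have : ¬ (c'.1 < c.1 ∧ c.1 < c'.2 ∧ c'.2 < c.2) := fun hx => hcross ⟨c', hc', c, hc, hx⟩
      simp only [Noncrossing]
      omega
  · rintro ⟨hb, hm, hnc⟩
    refine ⟨fun c hc => ⟨(hb c hc).2.1, (hb c hc).2.2, ?_⟩, fun c hc c' hc' h => ?_, ?_⟩
    · obtain ⟨e | e, he⟩ := hm c hc
      exacts [⟨e, Or.inl he⟩, ⟨e, Or.inr he⟩]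
    · have := hnc hc hc' h
      have := hb c hc
      have := hb c' hc'
      simp only [Noncrossing] at *
      omega
    · rintro ⟨c, hc, c', hc', h⟩
      have := hnc hc hc' (by rintro rfl; omega)
      simp only [Noncrossing] at *
      omega

theorem IsCutOn.mono {lo hi lo' hi' : ℕ} {H H' : Set (ℕ × ℕ)} (hH : IsCutOn L lo hi H)
    (hsub : H' ⊆ H) (hb : ∀ c ∈ H', lo' ≤ c.1 ∧ c.2 < hi') : IsCutOn L lo' hi' H' where
  bounds c hc := ⟨(hb c hc).1, (hH.bounds c (hsub hc)).2.1, (hb c hc).2⟩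
  matched c hc := hH.matched c (hsub hc)
  noncrossing := hH.noncrossing.mono hsub

theorem FitsAt.isCutOn (hw : FitsAt L o w) :
    IsCutOn L o (o + w.length) {c | c ∈ chords o w} where
  bounds _ := bounds_of_mem_chords
  matched := by
    simp only [Set.mem_ofPred_eq]
    induction w generalizing o <;> grind [chords, fitsAt_arr, fitsAt_chord]
  noncrossing := by
    clear hw
    induction w generalizing o <;>
      grind [chords, Set.Pairwise, Noncrossing, → bounds_of_mem_chords]

theorem IsCutOn.exists_cutWord {n : ℕ} {H : Set (ℕ × ℕ)} (hH : IsCutOn L o (o + n) H)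
    (ho : o + n ≤ L.length) :
    ∃ w, FitsAt L o w ∧ w.length = n ∧ ∀ c, c ∈ chords o w ↔ c ∈ H := by
  induction n using Nat.strong_induction_on generalizing o H with
  | _ n ih =>
    rcases n with _ | n
    · exact ⟨nil, List.nil_prefix, rfl, fun c => by have := hH.bounds c; grind [chords]⟩
    by_cases hex : ∃ j, (o, j) ∈ H
    · obtain ⟨j, hj⟩ := hex
      obtain ⟨a, ha, ha'⟩ := hH.matched _ hj
      obtain ⟨-, hoj, hjn⟩ := hH.bounds _ hj
      have hcases : ∀ c ∈ H, c = (o, j) ∨ (o < c.1 ∧ c.2 < j) ∨ j < c.1 := fun c hc => by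
        have := hH.bounds c hc
        have := hH.noncrossing hj hc
        grind [Noncrossing]
      obtain ⟨m, hm, hml, hmc⟩ := ih (j - o - 1) (by grind) (o := o + 1)
        (hH.mono (H' := {c ∈ H | o < c.1 ∧ c.2 < j}) (Set.sep_subset _ _)
          (by grind)) (by grind)
      obtain ⟨r, hr, hrl, hrc⟩ := ih (o + n - j) (by grind) (o := j + 1)
        (hH.mono (H' := {c ∈ H | j < c.1}) (Set.sep_subset _ _)
          (by have := hH.bounds; grind)) (by grind)
      obtain rfl : j = o + m.length + 1 := by grind
      refine ⟨chord a m r, fitsAt_chord.2 ⟨ha, hm, ha', hr⟩, by grind [length_chord],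
        fun c => ?_⟩
      simp only [chords, List.mem_cons, List.mem_append, hmc, hrc]
      grind
    · obtain ⟨w, hw, hwl, hwc⟩ := ih n (by omega) (o := o + 1)
        (hH.mono subset_rfl fun c hc => by have := hH.bounds c hc; grind) (by omega)
      have hlt : o < L.length := by omega
      exact ⟨arr L[o] w, fitsAt_arr.2 ⟨List.getElem?_eq_getElem hlt, hw⟩, by simp [hwl], hwc⟩

theorem FitsAt.eq_of_chords {w' : CutWord E} (hw : FitsAt L o w) (hw' : FitsAt L o w')
    (hl : w.length = w'.length) (hc : ∀ c, c ∈ chords o w ↔ c ∈ chords o w') : w = w' := by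
  induction w generalizing o w' with
  | nil => cases w' <;> simp_all
  | arr a w ih =>
    cases w' with
    | nil => simp at hl
    | arr a' w' =>
      rw [fitsAt_arr] at hw hw'
      rw [Option.some.inj (hw.1.symm.trans hw'.1), ih hw.2 hw'.2 (by simpa using hl) hc]
    | chord a' m' r' =>
      have := bounds_of_mem_chords (w := w) ((hc _).2 List.mem_cons_self)
      simp at this
  | chord a m r ihm ihr =>
    cases w' with
    | nil => simp at hl
    | arr a' w' =>
      have := bounds_of_mem_chords (w := w') ((hc _).1 List.mem_cons_self)
      simp at this
    | chord a' m' r' =>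
      have hm : m.length = m'.length := by
        have hmem : (o, o + m.length + 1) ∈ chords o (chord a' m' r') :=
          (hc _).1 List.mem_cons_self
        rcases List.mem_cons.1 hmem with h | h <;> grind [→ bounds_of_mem_chords]
      have hr : r.length = r'.length := by simp only [length_chord] at hl; omega
      have hcm c : c ∈ chords (o + 1) m ↔ c ∈ chords (o + 1) m' := by
        rw [mem_chords_below, mem_chords_below, hc, hm]
      have hcr c : c ∈ chords (o + m.length + 2) r ↔ c ∈ chords (o + m.length + 2) r' := by
        rw [mem_chords_right, hc, hm, mem_chords_right]
      rw [fitsAt_chord] at hw hw'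
      rw [← hm] at hw'
      rw [Option.some.inj (hw.1.symm.trans hw'.1), ihm hw.2.1 hw'.2.1 hm hcm,
        ihr hw.2.2.2 hw'.2.2.2 hr hcr]

end Chords

section CutWords

variable {l : List (Arr E)}

theorem mem_allCuts {H : Finset (ℕ × ℕ)} : H ∈ allCuts l ↔ IsCut l H := by
  simp only [allCuts, Finset.mem_filter, Finset.mem_powerset, and_iff_right_iff_imp]
  intro h c hc
  have := h.1 c hc
  simp only [Finset.mem_product, Finset.mem_range]
  omega

theorem bijOn_chords (l : List (Arr E)) :
    Set.BijOn (fun w : CutWord E => (chords 0 w).toFinset) {w | w.word = l} (allCuts l) := by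
  simp only [Set.BijOn, Set.MapsTo, Set.InjOn, Set.SurjOn, Set.subset_def, Finset.mem_coe,
    mem_allCuts, isCut_iff_isCutOn]
  refine ⟨?_, ?_, fun H hH => ?_⟩
  · rintro w rfl
    simpa [length] using (fitsAt_word w).isCutOn
  · rintro w rfl w' (hw' : w'.word = w.word) h
    refine (fitsAt_word w).eq_of_chords (hw' ▸ fitsAt_word w') (by simp [length, hw']) fun c => ?_
    simpa using Finset.ext_iff.1 h c
  · rw [← Nat.zero_add l.length] at hH
    obtain ⟨w, hw, hl, hc⟩ := hH.exists_cutWord (by omega)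
    exact ⟨w, hw.word_eq hl, by ext; simp [hc]⟩

/-- The cut words with underlying word `l`, in bijection with the cuts of `l`. -/
def cutWords (l : List (Arr E)) : Finset (CutWord E) :=
  ((bijOn_chords l).finite_iff_finite.2 (allCuts l).finite_toSet).toFinset

@[simp] theorem mem_cutWords {w : CutWord E} :
    w ∈ cutWords l ↔ w.word = l := by
  simp [cutWords]

theorem sum_allCuts {M : Type*} [AddCommMonoid M] (f : Finset (ℕ × ℕ) → M) :
    ∑ H ∈ allCuts l, f H = ∑ w ∈ cutWords l, f (chords 0 w).toFinset := by
  obtain ⟨hmaps, hinj, hsurj⟩ := bijOn_chords l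
  have hset : {w : CutWord E | w.word = l} = cutWords l := by ext; simp
  rw [hset] at hmaps hinj hsurj
  exact (Finset.sum_nbij _ hmaps hinj hsurj fun _ _ => rfl).symm

end CutWords

/-! ### The dual tree of a cut word -/

/-- A chord of a cut word that bounds the outer face: the position of its left end, the letter
there, and the cut word below the chord. -/
structure TopChord (E : Type*) where
  left : ℕ
  arrow : Arr E
  under : CutWord E

/-- The pair of positions joined by the chord. -/
def TopChord.ends (x : TopChord E) : ℕ × ℕ := (x.left, x.left + x.under.length + 1)

section Faces

variable {L : List (Arr E)} {o : ℕ} {w : CutWord E}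

/-- The label of the outer face: its letters that are incident to no chord. -/
def outerWord : CutWord E → List (Arr E)
  | nil => []
  | arr a w => a :: w.outerWord
  | chord _ _ r => r.outerWord

/-- The positions of the letters of `outerWord w`, when `w` starts at position `o`. -/
def outerPos : ℕ → CutWord E → List ℕ
  | _, nil => []
  | o, arr _ w => o :: outerPos (o + 1) w
  | o, chord _ m r => outerPos (o + m.length + 2) r

/-- The chords bounding the outer face from left to right, when `w` starts at position `o`. -/
def tops : ℕ → CutWord E → List (TopChord E)
  | _, nil => []
  | o, arr _ w => tops (o + 1) w
  | o, chord a m r => ⟨o, a, m⟩ :: tops (o + m.length + 2) r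

theorem mem_map_tops {c : ℕ × ℕ} :
    c ∈ (tops o w).map TopChord.ends ↔
      c ∈ chords o w ∧ ∀ c' ∈ chords o w, ¬ (c'.1 < c.1 ∧ c.2 < c'.2) := by
  induction w generalizing o with
  | nil => simp [tops, chords]
  | arr _ _ ih => exact ih
  | chord a m r _ ihr =>
    simp only [tops, List.map_cons, List.mem_cons, ihr, chords, List.mem_append, TopChord.ends,
      or_imp, forall_and, forall_eq]
    constructor <;> grind [→ bounds_of_mem_chords]

theorem ends_mem_chords {x : TopChord E} (hx : x ∈ tops o w) : x.ends ∈ chords o w :=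
  (mem_map_tops.1 (List.mem_map_of_mem hx)).1

theorem pairwise_tops (o : ℕ) (w : CutWord E) :
    ((tops o w).map TopChord.ends).Pairwise fun c c' => c.1 < c'.1 := by
  induction w generalizing o with
  | nil => exact List.Pairwise.nil
  | arr _ _ ih => exact ih _
  | chord a m r _ ihr =>
    refine List.pairwise_cons.2 ⟨fun c hc => ?_, ihr _⟩
    have := bounds_of_mem_chords (mem_map_tops.1 hc).1
    simp only [TopChord.ends]
    omega

theorem mem_chords_under {x : TopChord E} (hx : x ∈ tops o w) {c : ℕ × ℕ} :
    c ∈ chords (x.left + 1) x.under ↔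
      c ∈ chords o w ∧ x.ends.1 < c.1 ∧ c.2 < x.ends.2 := by
  induction w generalizing o with
  | nil => simp [tops] at hx
  | arr _ _ ih => exact ih hx
  | chord a m r _ ihr =>
    rcases List.mem_cons.1 hx with rfl | hx
    · exact mem_chords_below
    · have := bounds_of_mem_chords (ends_mem_chords hx)
      rw [ihr hx, mem_chords_right (a := a)]
      grind

theorem FitsAt.of_mem_tops (hw : FitsAt L o w) {x : TopChord E} (hx : x ∈ tops o w) :
    L[x.left]? = some x.arrow ∧ FitsAt L (x.left + 1) x.under := by
  induction w generalizing o <;> grind [tops, fitsAt_arr, fitsAt_chord]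

theorem mem_outerPos {i : ℕ} :
    i ∈ outerPos o w ↔ (o ≤ i ∧ i < o + w.length) ∧
      ∀ c ∈ (tops o w).map TopChord.ends, ¬ (c.1 ≤ i ∧ i ≤ c.2) := by
  induction w generalizing o with
  | nil => simp [outerPos]
  | arr a w ih =>
    have hlt : ∀ c ∈ (tops (o + 1) w).map TopChord.ends, o < c.1 := fun c hc =>
      (bounds_of_mem_chords (mem_map_tops.1 hc).1).1
    simp only [outerPos, List.mem_cons, ih, tops, length_arr]
    grind
  | chord a m r _ ihr =>
    simp only [outerPos, ihr, tops, length_chord, List.map_cons, List.forall_mem_cons,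
      TopChord.ends]
    grind

theorem pairwise_outerPos (o : ℕ) (w : CutWord E) : (outerPos o w).Pairwise (· < ·) := by
  induction w generalizing o with
  | nil => exact List.Pairwise.nil
  | arr _ _ ih => exact List.pairwise_cons.2 ⟨fun i hi => (mem_outerPos.1 hi).1.1, ih _⟩
  | chord _ _ _ _ ihr => exact ihr _

theorem FitsAt.filterMap_outerPos (hw : FitsAt L o w) :
    (outerPos o w).filterMap (fun i => L[i]?) = w.outerWord := by
  induction w generalizing o <;> simp_all [outerPos, outerWord]

end Faces

section BuildT

variable {L : List (Arr E)} {H : List (ℕ × ℕ)} {n lo hi o : ℕ} {w : CutWord E}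

/-- The chord of `H` with left end `i`, if it lies in the window `[lo, hi)` and below no other
chord of `H` in this window: a step in the recursion defining `buildT`. -/
def outermostAt (H : List (ℕ × ℕ)) (lo hi i : ℕ) : Option (ℕ × ℕ) :=
  match H.find? (fun c => c.1 == i) with
  | some c => if lo ≤ c.1 ∧ c.2 < hi ∧
      ¬ (H.any (fun c' =>
        decide (c' ≠ c ∧ lo ≤ c'.1 ∧ c'.1 < c.1 ∧ c.2 < c'.2 ∧ c'.2 < hi)))
      then some c else none
  | none => none

/-- The outermost chords of `H` in the window `[lo, hi)`, as computed by `buildT`. -/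
def outermost (n : ℕ) (H : List (ℕ × ℕ)) (lo hi : ℕ) : List (ℕ × ℕ) :=
  (List.range n).filterMap (outermostAt H lo hi)

/-- The letters of `L` in the window `[lo, hi)` that lie below none of the chords `outer`, as
computed by `buildT`. -/
def faceLabel (L : List (Arr E)) (outer : List (ℕ × ℕ)) (lo hi : ℕ) : List (Arr E) :=
  (List.range L.length).filterMap fun m =>
    if lo ≤ m ∧ m < hi ∧ ¬ outer.any (fun c => decide (c.1 ≤ m ∧ m ≤ c.2)) then L[m]? else none

theorem buildT_succ (L : List (Arr E)) (fuel : ℕ) (H : List (ℕ × ℕ)) (lo hi : ℕ) (v : I) :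
    buildT s t L (fuel + 1) H lo hi v =
      .node (mkQPD s t v (faceLabel L (outermost L.length H lo hi) lo hi))
        ((outermost L.length H lo hi).map fun c =>
          ((match L[c.1]? with | some (.inl _) => true | _ => false),
            buildT s t L fuel (H.filter fun c' => decide (c.1 < c'.1 ∧ c'.2 < c.2)) (c.1 + 1) c.2
              (match L[c.1]? with | some a => atgt s t a | none => v))) :=
  rfl

theorem outermostAt_eq_some_iff {i : ℕ} {c : ℕ × ℕ} :
    outermostAt H lo hi i = some c ↔
      H.find? (fun c => c.1 == i) = some c ∧ lo ≤ c.1 ∧ c.2 < hi ∧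
        ∀ c' ∈ H, ¬ (lo ≤ c'.1 ∧ c'.1 < c.1 ∧ c.2 < c'.2 ∧ c'.2 < hi) := by
  unfold outermostAt
  grind

theorem mem_outermost (hH : Set.InjOn Prod.fst {c | c ∈ H}) {c : ℕ × ℕ} :
    c ∈ outermost n H lo hi ↔
      c ∈ H ∧ c.1 < n ∧ lo ≤ c.1 ∧ c.2 < hi ∧
        ∀ c' ∈ H, ¬ (lo ≤ c'.1 ∧ c'.1 < c.1 ∧ c.2 < c'.2 ∧ c'.2 < hi) := by
  have hfind i : H.find? (fun c => c.1 == i) = some c ↔ c ∈ H ∧ c.1 = i := by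
    refine ⟨fun h => ⟨List.mem_of_find?_eq_some h, by simpa using List.find?_some h⟩, ?_⟩
    rintro ⟨hc, rfl⟩
    obtain ⟨c', hc'⟩ := Option.isSome_iff_exists.1
      (List.find?_isSome (p := fun c' => c'.1 == c.1).2 ⟨c, hc, beq_self_eq_true c.1⟩)
    rwa [hH (List.mem_of_find?_eq_some hc') hc (by simpa using List.find?_some hc')] at hc'
  simp only [outermost, List.mem_filterMap, List.mem_range, outermostAt_eq_some_iff, hfind]
  grind

theorem pairwise_outermost (n : ℕ) (H : List (ℕ × ℕ)) (lo hi : ℕ) :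
    (outermost n H lo hi).Pairwise fun c c' => c.1 < c'.1 := by
  refine List.Pairwise.filterMap _ (fun i j hij c hc c' hc' => ?_) List.pairwise_lt_range
  have := List.find?_some (outermostAt_eq_some_iff.1 hc).1
  have := List.find?_some (outermostAt_eq_some_iff.1 hc').1
  grind

theorem outermost_eq_tops (hH : ∀ c, c ∈ H ↔ c ∈ chords o w) (hn : o + w.length ≤ n) :
    outermost n H o (o + w.length) = (tops o w).map TopChord.ends := by
  have hinj : Set.InjOn Prod.fst {c | c ∈ H} := fun c hc c' hc' =>
    List.inj_on_of_nodup_map (nodup_map_fst_chords o w) ((hH c).1 hc) ((hH c').1 hc')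
  refine List.Pairwise.eq_of_mem_iff (r := fun c c' => c.1 < c'.1)
    (pairwise_outermost _ _ _ _) (pairwise_tops o w) fun c => ?_
  simp only [mem_outermost hinj, mem_map_tops, hH]
  have hb : ∀ c ∈ chords o w, o ≤ c.1 ∧ c.1 < c.2 ∧ c.2 < o + w.length :=
    fun c hc => bounds_of_mem_chords hc
  grind

theorem FitsAt.faceLabel_eq (hw : FitsAt L o w) (hL : o + w.length ≤ L.length) :
    faceLabel L ((tops o w).map TopChord.ends) o (o + w.length) = w.outerWord := by
  have hpos : outerPos o w = (List.range L.length).filter fun m =>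
      decide (o ≤ m ∧ m < o + w.length ∧
        ¬ ((tops o w).map TopChord.ends).any fun c => decide (c.1 ≤ m ∧ m ≤ c.2)) := by
    refine List.Pairwise.eq_of_mem_iff (pairwise_outerPos o w)
      (List.pairwise_lt_range.filter _) fun i => ?_
    simp only [mem_outerPos, List.mem_filter, List.mem_range, decide_eq_true_eq, List.any_eq_true]
    grind
  rw [← hw.filterMap_outerPos, hpos, List.filterMap_filter]
  simp only [faceLabel, decide_eq_true_eq]

end BuildT

/-- The children of the root of the dual tree of a cut word. -/
def children : CutWord E → List (Bool × DTree s t)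
  | nil => []
  | arr _ w => children w
  | chord a m r =>
      (a.isLeft, .node (mkQPD s t (atgt s t a) m.outerWord) (children m)) :: children r

/-- The dual tree of a cut word whose outer face is labelled by a path from `v`. -/
def tree (v : I) (w : CutWord E) : DTree s t :=
  .node (mkQPD s t v w.outerWord) (children s t w)

theorem children_eq_map_tops (o : ℕ) (w : CutWord E) :
    children s t w =
      (tops o w).map fun x => (x.arrow.isLeft, tree s t (atgt s t x.arrow) x.under) := by
  induction w generalizing o with
  | nil => rfl
  | arr _ _ ih => exact ih _
  | chord _ m r _ ihr => simp only [children, tops, List.map_cons, ← ihr]; rfl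

theorem FitsAt.buildT_eq_tree {L : List (Arr E)} {H : List (ℕ × ℕ)} {fuel o hi : ℕ}
    {w : CutWord E} (hw : FitsAt L o w) (hhi : hi = o + w.length) (hL : hi ≤ L.length)
    (hH : ∀ c, c ∈ H ↔ c ∈ chords o w) (hf : w.length < fuel) (v : I) :
    buildT s t L fuel H o hi v = tree s t v w := by
  induction fuel generalizing H o hi v w with
  | zero => omega
  | succ fuel ih =>
    subst hhi
    rw [buildT_succ, outermost_eq_tops hH hL, hw.faceLabel_eq hL, tree,
      children_eq_map_tops s t o w, List.map_map]
    congr 1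
    refine List.map_congr_left fun x hx => ?_
    obtain ⟨harr, hfit⟩ := hw.of_mem_tops hx
    replace harr : L[x.ends.1]? = some x.arrow := harr
    have hb := bounds_of_mem_chords (ends_mem_chords hx)
    have hends : x.ends.2 = x.ends.1 + 1 + x.under.length := Nat.add_right_comm _ _ _
    simp only [Function.comp_apply, harr]
    refine Prod.ext (by cases x.arrow <;> rfl) ?_
    refine ih hfit hends (by omega) (fun c => ?_) (by omega) _
    rw [mem_chords_under hx, List.mem_filter, hH, decide_eq_true_eq]

theorem dualTree_eq_tree (v : I) (w : CutWord E) :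
    dualTree s t v w.word (chords 0 w).toFinset = tree s t v w :=
  (fitsAt_word w).buildT_eq_tree s t (Nat.zero_add _).symm le_rfl (by simp)
    (Nat.lt_succ_self _) v

/-- The sign of the cut of a cut word. -/
def sgn : CutWord E → k
  | nil => 1
  | arr _ w => w.sgn
  | chord a m r => -(omg k a (astar a)) * (m.sgn * r.sgn)

theorem FitsAt.prod_epsFactor {L : List (Arr E)} {o : ℕ} {w : CutWord E} (hw : FitsAt L o w) :
    ((chords o w).map (epsFactor k L)).prod = w.sgn k := by
  induction w generalizing o with
  | nil => rfl
  | arr _ _ ih => exact ih (fitsAt_arr.1 hw).2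
  | chord a m r ihm ihr =>
    obtain ⟨ha, hm, ha', hr⟩ := fitsAt_chord.1 hw
    rw [chords, List.map_cons, List.map_append, List.prod_cons, List.prod_append, ihm hm, ihr hr]
    simp only [epsFactor, ha, ha', sgn]

theorem epsH_chords (w : CutWord E) : epsH k w.word (chords 0 w).toFinset = w.sgn k := by
  rw [epsH, List.prod_toFinset _ (nodup_map_fst_chords 0 w).of_map]
  exact (fitsAt_word w).prod_epsFactor k

/-! ### Splitting a cut word at a chord -/

/-- A cut word with a distinguished chord, taken apart: the position of the left end of the
chord, the letter there, the cut word below the chord, and the cut word that remains when the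
chord, its ends and everything below it are deleted. -/
structure Split (E : Type*) where
  pos : ℕ
  arrow : Arr E
  inner : CutWord E
  outer : CutWord E

section Splits

variable {w : CutWord E}

/-- The pair of positions joined by the distinguished chord. -/
def Split.ends (x : Split E) : ℕ × ℕ := (x.pos, x.pos + x.inner.length + 1)

/-- One splitting of `w` for each of its chords. -/
def splits : CutWord E → List (Split E)
  | nil => []
  | arr b w => w.splits.map fun x => { x with pos := x.pos + 1, outer := arr b x.outer }
  | chord b m r => ⟨0, b, m, r⟩ ::
      (m.splits.map (fun x => { x with pos := x.pos + 1, outer := chord b x.outer r }) ++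
        r.splits.map fun x => { x with pos := x.pos + m.length + 2, outer := chord b m x.outer })

/-- Insert `a m a*`, with a chord joining its ends, at a position of a cut word; the value at a
position beyond its end is irrelevant. -/
def insertAt (a : Arr E) (m : CutWord E) : ℕ → CutWord E → CutWord E
  | 0, w => chord a m w
  | _ + 1, nil => nil
  | i + 1, arr b w => arr b (insertAt a m i w)
  | i + 1, chord b x r =>
      if i ≤ x.length then chord b (insertAt a m i x) r
      else chord b x (insertAt a m (i - (x.length + 1)) r)

/-- The cut word with distinguished chord from which a splitting arises. -/
def Split.glue (x : Split E) : CutWord E := insertAt x.arrow x.inner x.pos x.outer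

theorem mem_splits_insertAt (a : Arr E) (m : CutWord E) {i : ℕ} (hi : i ≤ w.length) :
    ⟨i, a, m, w⟩ ∈ splits (insertAt a m i w) := by
  induction w generalizing i <;> rcases i with _ | i <;>
    grind [insertAt, splits, length_nil, length_arr, length_chord]

theorem Split.pos_le_of_mem {x : Split E} (hx : x ∈ w.splits) : x.pos ≤ x.outer.length := by
  induction w generalizing x <;> grind [splits, length_arr, length_chord]

theorem Split.glue_of_mem {x : Split E} (hx : x ∈ w.splits) : x.glue = w := by
  unfold Split.glue
  induction w generalizing x <;>
    grind [insertAt, splits, length_arr, length_chord, → Split.pos_le_of_mem]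

theorem Split.pos_lt_of_mem {x : Split E} (hx : x ∈ w.splits) : x.pos < w.length := by
  induction w generalizing x <;> grind [splits, length_arr, length_chord]

theorem mem_splits {x : Split E} : x ∈ w.splits ↔ x.pos ≤ x.outer.length ∧ x.glue = w :=
  ⟨fun hx => ⟨Split.pos_le_of_mem hx, Split.glue_of_mem hx⟩,
    fun ⟨hx, h⟩ => h ▸ mem_splits_insertAt x.arrow x.inner hx⟩

theorem word_insertAt (a : Arr E) (m : CutWord E) {i : ℕ} (hi : i ≤ w.length) :
    (insertAt a m i w).word = w.word.take i ++ a :: (m.word ++ astar a :: w.word.drop i) := by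
  induction w generalizing i with
  | nil =>
    obtain rfl : i = 0 := by simpa using hi
    simp [insertAt, word]
  | arr b w ih =>
    rcases i with _ | i
    · simp [insertAt, word]
    · simp [insertAt, word, ih (i := i) (by simpa using hi)]
  | chord b x r ihx ihr =>
    rcases i with _ | i
    · simp [insertAt, word]
    rw [insertAt]
    split_ifs with h
    · rw [word, ihx h]
      rw [length] at h
      simp [word, List.take_append_of_le_length h, List.drop_append_of_le_length h]
    · obtain ⟨j, rfl⟩ : ∃ j, i = x.length + (j + 1) := ⟨i - (x.length + 1), by omega⟩
      have hj : j ≤ r.length := by rw [length_chord] at hi; omega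
      rw [word, Nat.add_sub_add_left, Nat.add_sub_cancel, ihr hj]
      simp [word, length, List.take_length_add_append, List.drop_length_add_append]

theorem pairwise_splits (w : CutWord E) : w.splits.Pairwise fun x y => x.pos < y.pos := by
  induction w with
  | nil => exact List.Pairwise.nil
  | arr b w ih => exact List.pairwise_map.2 (ih.imp Nat.succ_lt_succ)
  | chord b m r ihm ihr =>
    simp only [splits, List.pairwise_cons, List.pairwise_append, List.pairwise_map]
    grind [→ Split.pos_lt_of_mem]

theorem nodup_splits (w : CutWord E) : w.splits.Nodup :=
  (pairwise_splits w).imp fun h he => h.ne (congrArg Split.pos he)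

theorem Split.outerWord_outer {x : Split E} (hx : x ∈ w.splits) :
    x.outer.outerWord = w.outerWord := by
  induction w generalizing x <;> grind [splits, outerWord]

theorem sgn_eq_of_mem_splits {x : Split E} (hx : x ∈ w.splits) :
    w.sgn k = -(omg k x.arrow (astar x.arrow)) * (x.inner.sgn k * x.outer.sgn k) := by
  induction w generalizing x <;> grind [splits, sgn]

theorem cutsL_children (w : CutWord E) :
    DTree.cutsL (children s t w) =
      w.splits.map fun x => (tree s t (atgt s t x.arrow) x.inner, children s t x.outer) := by
  induction w with
  | nil => rfl
  | arr b w ih =>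
    simp only [children, ih, splits, List.map_map]
    rfl
  | chord b m r ihm ihr =>
    simp only [children, DTree.cutsL, DTree.cuts, ihm, ihr, splits, List.map_map, List.map_cons,
      List.map_append, List.cons_append]
    congr 2
    refine List.map_congr_left fun x hx => ?_
    simp only [Function.comp_apply, children, Split.outerWord_outer hx]

theorem cuts_tree (v : I) (w : CutWord E) :
    DTree.cuts (tree s t v w) =
      w.splits.map fun x => (tree s t (atgt s t x.arrow) x.inner, tree s t v x.outer) := by
  rw [tree, DTree.cuts, cutsL_children, List.map_map]
  refine List.map_congr_left fun x hx => ?_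
  simp only [Function.comp_apply, tree, Split.outerWord_outer hx]

end Splits

section SplitsOf

variable {l u v r : List (Arr E)} {a b : Arr E} {x : Split E}

/-- The splittings of the cut words on `l`: the pairs of a cut of `l` and a chord of it. -/
def splitsOf (l : List (Arr E)) : Finset (Split E) :=
  (cutWords l).biUnion fun w => w.splits.toFinset

theorem mem_splitsOf : x ∈ splitsOf l ↔ x.pos ≤ x.outer.length ∧ x.glue.word = l := by
  simp [splitsOf, mem_splits, and_comm]

theorem sum_splitsOf {M : Type*} [AddCommMonoid M] (l : List (Arr E)) (f : Split E → M) :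
    ∑ x ∈ splitsOf l, f x = ∑ w ∈ cutWords l, ∑ x ∈ w.splits.toFinset, f x := by
  refine Finset.sum_biUnion fun w _ w' _ hne => Finset.disjoint_left.2 fun x hx hx' => hne ?_
  rw [← Split.glue_of_mem (List.mem_toFinset.1 hx), Split.glue_of_mem (List.mem_toFinset.1 hx')]

theorem ends_of_mem_splitsOf (hx : x ∈ splitsOf l) :
    x.ends.1 < x.ends.2 ∧ x.ends.2 < l.length := by
  obtain ⟨hpos, rfl⟩ := mem_splitsOf.1 hx
  simp only [Split.glue, word_insertAt _ _ hpos, Split.ends, length] at *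
  grind

theorem mem_splitsOf_and_ends_eq_iff :
    x ∈ splitsOf (u ++ a :: (v ++ b :: r)) ∧ x.ends = (u.length, u.length + v.length + 1) ↔
      b = astar a ∧ x.pos = u.length ∧ x.arrow = a ∧ x.inner.word = v ∧ x.outer.word = u ++ r := by
  obtain ⟨i, c, m, w⟩ := x
  simp only [mem_splitsOf, Split.ends, Prod.mk.injEq, Split.glue]
  constructor
  · rintro ⟨⟨hpos, hw⟩, rfl, hj⟩
    rw [word_insertAt _ _ hpos] at hw
    obtain ⟨hu, hw'⟩ := List.append_inj hw (List.length_take_of_le hpos)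
    obtain ⟨rfl, hw''⟩ := List.cons_eq_cons.1 hw'
    obtain ⟨rfl, hr⟩ := List.append_inj hw'' (by simpa [length] using hj)
    obtain ⟨rfl, rfl⟩ := List.cons_eq_cons.1 hr
    exact ⟨rfl, rfl, rfl, rfl, (List.take_append_drop _ _).symm.trans (congrArg (· ++ _) hu)⟩
  · rintro ⟨rfl, rfl, rfl, rfl, hw⟩
    have hpos : u.length ≤ w.length := by simp [length, hw]
    simp [word_insertAt _ _ hpos, hw, length]

theorem sum_splitsOf_ends {M : Type*} [AddCommMonoid M] (f : Split E → M) :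
    ∑ x ∈ splitsOf (u ++ a :: (v ++ b :: r)) with x.ends = (u.length, u.length + v.length + 1),
      f x = if b = astar a then
        ∑ m ∈ cutWords v, ∑ w ∈ cutWords (u ++ r), f ⟨u.length, a, m, w⟩ else 0 := by
  split_ifs with hb
  · rw [← Finset.sum_product']
    refine Finset.sum_nbij' (fun x => (x.inner, x.outer)) (fun y => ⟨u.length, a, y.1, y.2⟩)
      ?_ ?_ ?_ ?_ ?_ <;>
      simp only [Finset.mem_filter, mem_splitsOf_and_ends_eq_iff, Finset.mem_product, mem_cutWords]
    · grind
    · grind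
    · rintro ⟨i, c, m, w⟩ ⟨-, rfl, rfl, -⟩
      rfl
    · simp
    · rintro ⟨i, c, m, w⟩ ⟨-, rfl, rfl, -⟩
      rfl
  · refine Finset.sum_eq_zero fun x hx => ?_
    exact absurd (mem_splitsOf_and_ends_eq_iff.1 (Finset.mem_filter.1 hx)).1 hb

end SplitsOf

/-- The word `l` with the empty cut. -/
def flat : List (Arr E) → CutWord E
  | [] => nil
  | a :: l => arr a (flat l)

theorem word_flat (l : List (Arr E)) : (flat l).word = l := by
  induction l <;> simp_all [flat, word]

theorem outerWord_flat (l : List (Arr E)) : (flat l).outerWord = l := by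
  induction l <;> simp_all [flat, outerWord]

theorem sgn_flat (l : List (Arr E)) : (flat l).sgn k = 1 := by
  induction l <;> simp_all [flat, sgn]

theorem children_eq_nil_iff {w : CutWord E} :
    children s t w = [] ↔ w = flat w.word := by
  induction w <;> simp_all [children, flat, word]

end CutWord

section Paths

variable {s t} {v : I}

theorem isPathFrom_append {l l' : List (Arr E)} :
    IsPathFrom s t v (l ++ l') ↔ IsPathFrom s t v l ∧ IsPathFrom s t (pathTgt s t v l) l' := by
  induction l generalizing v with
  | nil => simp [IsPathFrom, pathTgt]
  | cons a l ih => simp [IsPathFrom, pathTgt, ih, and_assoc]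

theorem atgt_astar (a : Arr E) : atgt s t (astar a) = asrc s t a := by
  cases a <;> rfl

theorem IsPathFrom.of_matched {u m r : List (Arr E)} {a : Arr E}
    (h : IsPathFrom s t v (u ++ a :: (m ++ astar a :: r))) :
    IsPathFrom s t (atgt s t a) m ∧ IsPathFrom s t v (u ++ r) := by
  simp only [isPathFrom_append, IsPathFrom, atgt_astar] at h ⊢
  obtain ⟨hu, ha, hm, -, hr⟩ := h
  exact ⟨hm, hu, ha ▸ hr⟩

end Paths

theorem omg_eq_zero {a b : Arr E} (h : b ≠ astar a) :
    omg k a b = 0 := by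
  cases a <;> cases b <;> simp_all [omg, astar, eq_comm]

/-! ### The map `η_rt` on paths -/

section Eta

open CutWord

/-- The signed dual tree `ε_H (T_H, s_H)` of a cut word. -/
def cutTerm (v : I) (w : CutWord E) : DMod k s t :=
  w.sgn k • Finsupp.single (tree s t v w) 1

theorem etaRt_single (p : QPath s t) :
    etaRt k s t (Finsupp.single p 1) = ∑ w ∈ cutWords p.arrows, cutTerm k s t p.src w := by
  rw [etaRt, Finsupp.lift_apply, Finsupp.sum_single_index (by simp), one_smul, sum_allCuts]
  refine Finset.sum_congr rfl fun w hw => ?_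
  rw [← mem_cutWords.1 hw, epsH_chords, dualTree_eq_tree, cutTerm]

theorem etaRt_mkP {v : I} {l : List (Arr E)} (h : IsPathFrom s t v l) :
    etaRt k s t (mkP k s t v l) = ∑ w ∈ cutWords l, cutTerm k s t v w := by
  rw [mkP, dif_pos h, etaRt_single]

/-- The signed tensor of the two trees obtained from the dual tree of a cut word by deleting the
edge dual to the chord at which the word is split. -/
def splitTerm (v : I) (x : Split E) : DMod k s t ⊗[k] DMod k s t :=
  -omg k x.arrow (astar x.arrow) •
    (cutTerm k s t (atgt s t x.arrow) x.inner ⊗ₜ[k] cutTerm k s t v x.outer)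

theorem rhoD_cutTerm (v : I) (w : CutWord E) :
    rhoD k s t (cutTerm k s t v w) = ∑ x ∈ w.splits.toFinset, splitTerm k s t v x := by
  have hsingle : rhoD k s t (Finsupp.single (tree s t v w) 1) =
      ∑ x ∈ w.splits.toFinset,
        Finsupp.single (tree s t (atgt s t x.arrow) x.inner) (1 : k) ⊗ₜ[k]
          Finsupp.single (tree s t v x.outer) (1 : k) := by
    rw [rhoD, Finsupp.lift_apply, Finsupp.sum_single_index (by simp), one_smul,
      List.sum_toFinset _ (nodup_splits w), cuts_tree, List.map_map]
    rfl
  rw [cutTerm, map_smul, hsingle, Finset.smul_sum]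
  refine Finset.sum_congr rfl fun x hx => ?_
  rw [sgn_eq_of_mem_splits k (List.mem_toFinset.1 hx), splitTerm, cutTerm, cutTerm,
    TensorProduct.smul_tmul_smul, smul_smul]

theorem rhoD_etaRt_single (p : QPath s t) :
    rhoD k s t (etaRt k s t (Finsupp.single p 1)) =
      ∑ x ∈ splitsOf p.arrows, splitTerm k s t p.src x := by
  simp only [etaRt_single, map_sum, rhoD_cutTerm, sum_splitsOf]

theorem dpTerm_of_arrows_eq {p : QPath s t} {u m r : List (Arr E)} {a b : Arr E}
    (hp : p.arrows = u ++ a :: (m ++ b :: r)) :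
    dpTerm k s t p u.length (u.length + m.length + 1) =
      -omg k a b • (mkP k s t (atgt s t a) m ⊗ₜ[k] mkP k s t p.src (u ++ r)) := by
  have hlast : (u ++ a :: (m ++ b :: r))[u.length + m.length + 1]? = some b := by
    simp [Nat.add_assoc]
  have hdrop : (u ++ a :: (m ++ b :: r)).drop (u.length + m.length + 1 + 1) = r := by
    simp [Nat.add_assoc, List.drop_length_add_append]
  have hlen : u.length + m.length + 1 - u.length - 1 = m.length := by omega
  simp [dpTerm, hp, hlast, hdrop, hlen]

theorem map_etaRt_dpTerm (p : QPath s t) {i j : ℕ} (hij : i < j) (hj : j < p.arrows.length) :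
    TensorProduct.map (etaRt k s t) (etaRt k s t) (dpTerm k s t p i j) =
      ∑ x ∈ splitsOf p.arrows with x.ends = (i, j), splitTerm k s t p.src x := by
  obtain ⟨v, l, hp⟩ := p
  obtain ⟨u, a, m, b, r, rfl, rfl, rfl⟩ := exists_eq_append_cons_append_cons hij hj
  rw [dpTerm_of_arrows_eq k s t rfl, sum_splitsOf_ends]
  split_ifs with hb
  · subst hb
    rw [map_smul, TensorProduct.map_tmul, etaRt_mkP k s t hp.of_matched.1,
      etaRt_mkP k s t hp.of_matched.2, TensorProduct.sum_tmul, Finset.smul_sum]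
    simp only [TensorProduct.tmul_sum, Finset.smul_sum, splitTerm]
  · rw [omg_eq_zero k hb, neg_zero, zero_smul, map_zero]

theorem map_etaRt_deltaPrt_single (p : QPath s t) :
    TensorProduct.map (etaRt k s t) (etaRt k s t) (deltaPrt k s t (Finsupp.single p 1)) =
      ∑ x ∈ splitsOf p.arrows, splitTerm k s t p.src x := by
  let pairs := (Finset.range p.arrows.length ×ˢ Finset.range p.arrows.length).filter
    fun c => c.1 < c.2
  have hends : ∀ x ∈ splitsOf p.arrows, x.ends ∈ pairs := fun x hx => by
    have := ends_of_mem_splitsOf hx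
    simp only [pairs, Finset.mem_filter, Finset.mem_product, Finset.mem_range]
    omega
  have hdelta : deltaPrt k s t (Finsupp.single p 1) = ∑ c ∈ pairs, dpTerm k s t p c.1 c.2 := by
    rw [deltaPrt, Finsupp.lift_apply, Finsupp.sum_single_index (by simp), one_smul,
      ← Finset.sum_product', Finset.sum_filter]
    simp only [zero_smul]
  rw [hdelta, map_sum, ← Finset.sum_fiberwise_of_maps_to hends]
  refine Finset.sum_congr rfl fun c hc => ?_
  simp only [pairs, Finset.mem_filter, Finset.mem_product, Finset.mem_range] at hc
  exact map_etaRt_dpTerm k s t p hc.2 hc.1.2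

/-! ### A left inverse of `η_rt` -/

/-- The tree with a single vertex, labelled by `p`. -/
def leaf (p : QPath s t) : DTree s t := .node p []

theorem leaf_injective : Function.Injective (leaf s t) :=
  fun _ _ h => (DTree.node.inj h).1

/-- The linear map sending a tree with a single vertex to the label of its root, and every other
tree to `0`. -/
def rootLabel : DMod k s t →ₗ[k] PathMod k s t :=
  Finsupp.lcomapDomain (leaf s t) (leaf_injective s t)

theorem mkQPD_of_isPathFrom {v : I} {l : List (Arr E)} (h : IsPathFrom s t v l) :
    mkQPD s t v l = ⟨v, l, h⟩ :=
  dif_pos h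

theorem rootLabel_cutTerm_flat (p : QPath s t) :
    rootLabel k s t (cutTerm k s t p.src (flat p.arrows)) = Finsupp.single p 1 := by
  rw [cutTerm, sgn_flat, one_smul, tree, (children_eq_nil_iff s t).2 (by rw [word_flat]),
    outerWord_flat, mkQPD_of_isPathFrom s t p.valid]
  exact Finsupp.comapDomain_single (leaf s t) p (1 : k) _

theorem rootLabel_cutTerm_eq_zero (v : I) {w : CutWord E} (hw : w ≠ flat w.word) :
    rootLabel k s t (cutTerm k s t v w) = 0 := by
  have hrange : tree s t v w ∉ Set.range (leaf s t) := by
    rintro ⟨p, hp⟩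
    exact hw ((children_eq_nil_iff s t).1 (DTree.node.inj hp).2.symm)
  rw [cutTerm, map_smul, rootLabel, Finsupp.lcomapDomain_apply,
    Finsupp.comapDomain_single_of_not_mem_range hrange, smul_zero]

theorem rootLabel_comp_etaRt : rootLabel k s t ∘ₗ etaRt k s t = LinearMap.id := by
  refine Finsupp.lhom_ext' fun p => LinearMap.ext_ring ?_
  simp only [LinearMap.comp_apply, Finsupp.lsingle_apply, LinearMap.id_apply, etaRt_single,
    map_sum]
  rw [Finset.sum_eq_single (flat p.arrows), rootLabel_cutTerm_flat]
  · intro w hw hne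
    rw [← mem_cutWords.1 hw] at hne
    exact rootLabel_cutTerm_eq_zero k s t _ hne
  · exact fun h => absurd (mem_cutWords.2 (word_flat _)) h

end Eta

/-- `η_rt` is an injective homomorphism of pre-Lie coalgebras
`(P, δ_{p,rt}) → (T_rt(Φ_rt), ρ)`. -/
theorem etaRt_injective_preLie_hom :
    Function.Injective (etaRt k s t) ∧
    TensorProduct.map (etaRt k s t) (etaRt k s t) ∘ₗ deltaPrt k s t =
      rhoD k s t ∘ₗ etaRt k s t := by
  constructor
  · exact Function.LeftInverse.injective (g := rootLabel k s t)
      (LinearMap.congr_fun (rootLabel_comp_etaRt k s t))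
  · refine Finsupp.lhom_ext' fun p => LinearMap.ext_ring ?_
    exact (map_etaRt_deltaPrt_single k s t p).trans (rhoD_etaRt_single k s t p).symm

end
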